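/- The series ∑_{n=3}^∞ log(n)·n^{-4} converges and its sum is at most 0.025590. -/

import Mathlib

/-!
For a convex function the value at the midpoint of an interval is at most the mean over that
interval, so the tail of the series of a convex `f` from `N` on is at most the integral of `f` over
`(N - 1/2, ∞)`. Here `f x = log x * x ^ r` is convex where `0 ≤ r (r - 1) log x + 2 r - 1` and has
the antiderivative `x ^ (r + 1) * (log x / (r + 1) - 1 / (r + 1) ^ 2)`. With `r = -4` the tail
estimate from `N = 17` on exceeds the tail by about `3.5e-7`, which fits below `0.025590`; the terms
up to `n = 16` only involve the logarithms of the primes up to `13`.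
-/

open Filter MeasureTheory Set
open scoped Topology

section MidpointRule

variable {f : ℝ → ℝ} {a b : ℝ}

lemma mul_midpoint_le_integral_of_convexOn (hab : a ≤ b) (hf : ConvexOn ℝ (Icc a b) f)
    (hint : IntervalIntegrable f volume a b) :
    (b - a) * f ((a + b) / 2) ≤ ∫ x in a..b, f x := by
  have hint' : IntervalIntegrable (fun x ↦ f (a + b - x)) volume a b := by
    simpa using (hint.comp_sub_left (a + b)).symm
  have hreflect : ∫ x in a..b, f (a + b - x) = ∫ x in a..b, f x := by
    simp [intervalIntegral.integral_comp_sub_left]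
  have hpair : ∀ x ∈ Icc a b, 2 * f ((a + b) / 2) ≤ f x + f (a + b - x) := by
    intro x hx
    have hx' : a + b - x ∈ Icc a b := ⟨by linarith [hx.2], by linarith [hx.1]⟩
    have hconv := hf.2 hx hx' (by norm_num : (0 : ℝ) ≤ 1 / 2) (by norm_num : (0 : ℝ) ≤ 1 / 2)
      (by norm_num)
    simp only [smul_eq_mul] at hconv
    rw [show 1 / 2 * x + 1 / 2 * (a + b - x) = (a + b) / 2 by ring] at hconv
    linarith
  have hdouble : (b - a) * (2 * f ((a + b) / 2)) ≤ 2 * ∫ x in a..b, f x :=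
    calc (b - a) * (2 * f ((a + b) / 2)) = ∫ _ in a..b, 2 * f ((a + b) / 2) :=
        (intervalIntegral.integral_const _).symm
      _ ≤ ∫ x in a..b, (f x + f (a + b - x)) :=
        intervalIntegral.integral_mono_on hab intervalIntegrable_const (hint.add hint') hpair
      _ = 2 * ∫ x in a..b, f x := by
        rw [intervalIntegral.integral_add hint hint', hreflect, two_mul]
  linarith

lemma sum_range_le_integral_of_convexOn {N : ℕ} (hf : ConvexOn ℝ (Icc a (a + N)) f)
    (hint : IntervalIntegrable f volume a (a + N)) :
    ∑ n ∈ Finset.range N, f (a + (n + 1 / 2)) ≤ ∫ x in a..(a + N), f x := by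
  have hsub : ∀ n < N, Icc (a + n) (a + (n + 1 : ℕ)) ⊆ Icc a (a + N) := fun n hn ↦
    Icc_subset_Icc (by simp) (by gcongr; exact hn)
  have hint' : ∀ n < N, IntervalIntegrable f volume (a + n) (a + (n + 1 : ℕ)) := fun n hn ↦
    hint.mono_set <| by simpa [uIcc_of_le] using hsub n hn
  calc ∑ n ∈ Finset.range N, f (a + (n + 1 / 2))
      ≤ ∑ n ∈ Finset.range N, ∫ x in (a + n)..(a + (n + 1 : ℕ)), f x := by
        refine Finset.sum_le_sum fun n hn ↦ ?_
        rw [Finset.mem_range] at hn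
        have hlength : a + (n + 1 : ℕ) - (a + n) = 1 := by push_cast; ring
        have hmid : (a + n + (a + (n + 1 : ℕ))) / 2 = a + (n + 1 / 2) := by push_cast; ring
        simpa only [hlength, hmid, one_mul] using mul_midpoint_le_integral_of_convexOn (by simp)
          (hf.subset (hsub n hn) (convex_Icc _ _)) (hint' n hn)
    _ = ∫ x in a..(a + N), f x := by
        simpa using
          intervalIntegral.sum_integral_adjacent_intervals (a := fun n : ℕ ↦ a + n) hint'

lemma sum_range_le_integral_Ioi_of_convexOn (hf : ConvexOn ℝ (Ici a) f)
    (hint : IntegrableOn f (Ioi a)) (hnonneg : ∀ x ∈ Ioi a, 0 ≤ f x) (N : ℕ) :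
    ∑ n ∈ Finset.range N, f (a + (n + 1 / 2)) ≤ ∫ x in Ioi a, f x := by
  have haN : a ≤ a + N := by simp
  calc ∑ n ∈ Finset.range N, f (a + (n + 1 / 2)) ≤ ∫ x in a..(a + N), f x :=
        sum_range_le_integral_of_convexOn (hf.subset Icc_subset_Ici_self (convex_Icc _ _))
          ((intervalIntegrable_iff_integrableOn_Ioc_of_le haN).2
            (hint.mono_set Ioc_subset_Ioi_self))
    _ = ∫ x in Ioc a (a + N), f x := intervalIntegral.integral_of_le haN
    _ ≤ ∫ x in Ioi a, f x :=
        setIntegral_mono_set hint (ae_restrict_of_forall_mem measurableSet_Ioi hnonneg)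
          Ioc_subset_Ioi_self.eventuallyLE

lemma summable_of_convexOn_of_integrableOn_Ioi (hf : ConvexOn ℝ (Ici a) f)
    (hint : IntegrableOn f (Ioi a)) (hnonneg : ∀ x ∈ Ioi a, 0 ≤ f x) :
    Summable fun n : ℕ ↦ f (a + (n + 1 / 2)) :=
  summable_of_sum_range_le (fun n ↦ hnonneg _ (lt_add_of_pos_right a (by positivity)))
    (sum_range_le_integral_Ioi_of_convexOn hf hint hnonneg)

lemma tsum_le_integral_Ioi_of_convexOn (hf : ConvexOn ℝ (Ici a) f)
    (hint : IntegrableOn f (Ioi a)) (hnonneg : ∀ x ∈ Ioi a, 0 ≤ f x) :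
    ∑' n : ℕ, f (a + (n + 1 / 2)) ≤ ∫ x in Ioi a, f x :=
  Real.tsum_le_of_sum_range_le (fun n ↦ hnonneg _ (lt_add_of_pos_right a (by positivity)))
    (sum_range_le_integral_Ioi_of_convexOn hf hint hnonneg)

end MidpointRule

section LogMulRpow

variable {r c x : ℝ}

lemma hasDerivAt_log_mul_rpow (hx : 0 < x) :
    HasDerivAt (fun t ↦ Real.log t * t ^ r) (x ^ (r - 1) * (r * Real.log x + 1)) x := by
  refine ((Real.hasDerivAt_log hx.ne').mul
    (Real.hasDerivAt_rpow_const (p := r) (.inl hx.ne'))).congr_deriv ?_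
  rw [Real.rpow_sub_one hx.ne']
  ring

lemma hasDerivAt_rpow_sub_one_mul_log_add_one (hx : 0 < x) :
    HasDerivAt (fun t ↦ t ^ (r - 1) * (r * Real.log t + 1))
      (x ^ (r - 2) * (r * (r - 1) * Real.log x + (2 * r - 1))) x := by
  refine ((Real.hasDerivAt_rpow_const (p := r - 1) (.inl hx.ne')).mul
    (((Real.hasDerivAt_log hx.ne').const_mul r).add_const 1)).congr_deriv ?_
  rw [show r - 1 - 1 = r - 2 by ring, show r - 1 = r - 2 + 1 by ring, Real.rpow_add_one hx.ne']
  field_simp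
  ring

lemma convexOn_log_mul_rpow (hr : 0 ≤ r * (r - 1)) (hc : 0 < c)
    (hrc : 0 ≤ r * (r - 1) * Real.log c + (2 * r - 1)) :
    ConvexOn ℝ (Ici c) fun x ↦ Real.log x * x ^ r := by
  have hpos : ∀ x ∈ Ici c, 0 < x := fun x hx ↦ hc.trans_le hx
  refine convexOn_of_hasDerivWithinAt2_nonneg (convex_Ici c)
    (fun x hx ↦ (hasDerivAt_log_mul_rpow (hpos x hx)).continuousAt.continuousWithinAt)
    (fun x hx ↦ (hasDerivAt_log_mul_rpow (hpos x (interior_subset hx))).hasDerivWithinAt)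
    (fun x hx ↦
      (hasDerivAt_rpow_sub_one_mul_log_add_one (hpos x (interior_subset hx))).hasDerivWithinAt)
    fun x hx ↦ ?_
  have hcx : c ≤ x := interior_subset hx
  have hlog : r * (r - 1) * Real.log c ≤ r * (r - 1) * Real.log x :=
    mul_le_mul_of_nonneg_left (Real.log_le_log hc hcx) hr
  exact mul_nonneg (Real.rpow_nonneg (hc.le.trans hcx) _) (by linarith)

lemma integrableOn_Ioi_log_mul_rpow (hr : r < -1) (hc : 0 < c) :
    IntegrableOn (fun x ↦ Real.log x * x ^ r) (Ioi c) := by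
  obtain ⟨s, hrs, hs⟩ := exists_between hr
  have hcont : ContinuousOn (fun x ↦ Real.log x * x ^ r) (Ici c) := fun x hx ↦
    (hasDerivAt_log_mul_rpow (hc.trans_le hx)).continuousAt.continuousWithinAt
  have hO : (fun x ↦ Real.log x * x ^ r) =O[atTop] fun x ↦ x ^ s := by
    refine ((isLittleO_log_rpow_atTop (sub_pos.2 hrs)).isBigO.mul
      (Asymptotics.isBigO_refl (fun x : ℝ ↦ x ^ r) atTop)).congr' .rfl ?_
    filter_upwards [eventually_gt_atTop 0] with x hx
    rw [← Real.rpow_add hx, sub_add_cancel]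
  exact ((hcont.locallyIntegrableOn measurableSet_Ici).integrableOn_of_isBigO_atTop hO
    ⟨Ioi c, Ioi_mem_atTop c, integrableOn_Ioi_rpow_of_lt hs hc⟩).mono_set Ioi_subset_Ici_self

lemma hasDerivAt_rpow_add_one_mul_log (hr : r + 1 ≠ 0) (hx : 0 < x) :
    HasDerivAt (fun t ↦ t ^ (r + 1) * (Real.log t / (r + 1) - 1 / (r + 1) ^ 2))
      (Real.log x * x ^ r) x := by
  refine ((Real.hasDerivAt_rpow_const (p := r + 1) (.inl hx.ne')).mul
    (((Real.hasDerivAt_log hx.ne').div_const (r + 1)).sub_const (1 / (r + 1) ^ 2))).congr_deriv ?_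
  rw [add_sub_cancel_right, Real.rpow_add_one hx.ne']
  field_simp
  ring

lemma tendsto_rpow_mul_log_atTop (hr : r < 0) :
    Tendsto (fun x ↦ x ^ r * Real.log x) atTop (𝓝 0) := by
  refine (isLittleO_log_rpow_atTop (neg_pos.2 hr)).tendsto_div_nhds_zero.congr' ?_
  filter_upwards [eventually_ge_atTop 0] with x hx
  rw [Real.rpow_neg hx, div_inv_eq_mul, mul_comm]

lemma integral_Ioi_log_mul_rpow (hr : r < -1) (hc : 0 < c) :
    ∫ x in Ioi c, Real.log x * x ^ r =
      -(c ^ (r + 1) * (Real.log c / (r + 1) - 1 / (r + 1) ^ 2)) := by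
  have hr' : r + 1 < 0 := by linarith
  have hrpow : Tendsto (fun x : ℝ ↦ x ^ (r + 1)) atTop (𝓝 0) := by
    simpa using tendsto_rpow_neg_atTop (neg_pos.2 hr')
  have hlim : Tendsto (fun x ↦ x ^ (r + 1) * (Real.log x / (r + 1) - 1 / (r + 1) ^ 2))
      atTop (𝓝 0) := by
    simpa only [mul_sub, mul_div_assoc, zero_div, zero_mul, sub_zero] using
      ((tendsto_rpow_mul_log_atTop hr').div_const (r + 1)).sub
        (hrpow.mul_const (1 / (r + 1) ^ 2))
  rw [integral_Ioi_of_hasDerivAt_of_tendsto'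
    (fun x hx ↦ hasDerivAt_rpow_add_one_mul_log hr'.ne (hc.trans_le hx))
    (integrableOn_Ioi_log_mul_rpow hr hc) hlim, zero_sub]

end LogMulRpow

lemma log_add_one_le_log_add_inv {x : ℝ} (hx : 0 < x) :
    Real.log (x + 1) ≤ Real.log x + x⁻¹ := by
  have h := Real.log_le_sub_one_of_pos (show 0 < (x + 1) / x by positivity)
  rw [Real.log_div (by positivity) hx.ne', add_div, div_self hx.ne', one_div] at h
  linarith

lemma log_two_pow_mul_three_pow_mul (i j : ℕ) {y : ℝ} (hy : y ≠ 0) :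
    Real.log (2 ^ i * 3 ^ j * y) = i * Real.log 2 + j * Real.log 3 + Real.log y := by
  rw [Real.log_mul (by positivity) hy, Real.log_mul (by positivity) (by positivity),
    Real.log_pow, Real.log_pow]

lemma log_seven_lt : Real.log 7 < 1.945911 := by
  have h := log_add_one_le_log_add_inv (show (0 : ℝ) < 2 ^ 5 * 3 ^ 1 * 5 ^ 2 by norm_num)
  rw [log_two_pow_mul_three_pow_mul _ _ (by norm_num), Real.log_pow,
    show (2 ^ 5 * 3 ^ 1 * 5 ^ 2 + 1 : ℝ) = 7 ^ 4 by norm_num, Real.log_pow] at h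
  norm_num at h
  linarith [Real.log_two_lt_d9, Real.log_three_lt_d9, Real.log_five_lt_d9]

lemma log_eleven_lt : Real.log 11 < 2.39792 := by
  have h := log_add_one_le_log_add_inv (show (0 : ℝ) < 2 ^ 3 * 3 ^ 1 * 5 by norm_num)
  rw [log_two_pow_mul_three_pow_mul _ _ (by norm_num),
    show (2 ^ 3 * 3 ^ 1 * 5 + 1 : ℝ) = 11 ^ 2 by norm_num, Real.log_pow] at h
  norm_num at h
  linarith [Real.log_two_lt_d9, Real.log_three_lt_d9, Real.log_five_lt_d9]

lemma log_thirteen_lt : Real.log 13 < 2.56496 := by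
  have h := log_add_one_le_log_add_inv (show (0 : ℝ) < 2 ^ 3 * 3 ^ 1 * 7 by norm_num)
  rw [log_two_pow_mul_three_pow_mul _ _ (by norm_num),
    show (2 ^ 3 * 3 ^ 1 * 7 + 1 : ℝ) = 13 ^ 2 by norm_num, Real.log_pow] at h
  norm_num at h
  linarith [Real.log_two_lt_d9, Real.log_three_lt_d9, log_seven_lt]

lemma sum_range_log_mul_zpow_neg_four_le :
    ∑ n ∈ Finset.range 14, Real.log (n + 3) * ((n : ℝ) + 3) ^ (-4 : ℤ) ≤ 0.02535722 := by
  have log_four := log_two_pow_mul_three_pow_mul 2 0 one_ne_zero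
  have log_six := log_two_pow_mul_three_pow_mul 1 1 one_ne_zero
  have log_eight := log_two_pow_mul_three_pow_mul 3 0 one_ne_zero
  have log_nine := log_two_pow_mul_three_pow_mul 0 2 one_ne_zero
  have log_ten := log_two_pow_mul_three_pow_mul 1 0 (OfNat.ofNat_ne_zero 5)
  have log_twelve := log_two_pow_mul_three_pow_mul 2 1 one_ne_zero
  have log_fourteen := log_two_pow_mul_three_pow_mul 1 0 (OfNat.ofNat_ne_zero 7)
  have log_fifteen := log_two_pow_mul_three_pow_mul 0 1 (OfNat.ofNat_ne_zero 5)
  have log_sixteen := log_two_pow_mul_three_pow_mul 4 0 one_ne_zero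
  norm_num at log_four log_six log_eight log_nine log_ten
  norm_num at log_twelve log_fourteen log_fifteen log_sixteen
  simp only [Finset.sum_range_succ, Finset.sum_range_zero]
  norm_num
  linarith [Real.log_two_lt_d9, Real.log_three_lt_d9, Real.log_five_lt_d9, log_seven_lt,
    log_eleven_lt, log_thirteen_lt]

lemma integral_Ioi_log_mul_rpow_neg_four_le :
    ∫ x in Ioi (33 / 2 : ℝ), Real.log x * x ^ (-4 : ℝ) ≤ 0.00023276 := by
  have hlog : Real.log (33 / 2) < 2.80339 := by
    rw [Real.log_div (by norm_num) (by norm_num), show (33 : ℝ) = 3 * 11 by norm_num,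
      Real.log_mul (by norm_num) (by norm_num)]
    linarith [Real.log_two_gt_d9, Real.log_three_lt_d9, log_eleven_lt]
  have hpow : (33 / 2 : ℝ) ^ (-4 + 1 : ℝ) = 8 / 35937 := by
    rw [show (-4 + 1 : ℝ) = ((-3 : ℤ) : ℝ) by norm_num, Real.rpow_intCast]
    norm_num
  rw [integral_Ioi_log_mul_rpow (by norm_num) (by norm_num), hpow]
  norm_num
  linarith

/-- The series `∑_{n=3}^∞ log(n) · n^(-4)` converges and its sum is at most
`0.025590`. -/
theorem summable_log_div_pow_four_and_tsum_le :
    Summable (fun n : ℕ => Real.log (n + 3) * ((n : ℝ) + 3) ^ (-4 : ℤ)) ∧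
      ∑' n : ℕ, Real.log (n + 3) * ((n : ℝ) + 3) ^ (-4 : ℤ) ≤ 0.025590 := by
  set f : ℝ → ℝ := fun x ↦ Real.log x * x ^ (-4 : ℝ)
  set u : ℕ → ℝ := fun n ↦ Real.log (n + 3) * ((n : ℝ) + 3) ^ (-4 : ℤ)
  have hconv : ConvexOn ℝ (Ici (33 / 2)) f :=
    convexOn_log_mul_rpow (by norm_num) (by norm_num) <| by
      linarith [Real.one_sub_inv_le_log_of_pos (show (0 : ℝ) < 33 / 2 by norm_num)]
  have hint : IntegrableOn f (Ioi (33 / 2)) :=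
    integrableOn_Ioi_log_mul_rpow (by norm_num) (by norm_num)
  have hnonneg : ∀ x ∈ Ioi (33 / 2 : ℝ), 0 ≤ f x := fun x (hx : 33 / 2 < x) ↦
    mul_nonneg (Real.log_nonneg (by linarith)) (Real.rpow_nonneg (by linarith) _)
  have htail : (fun n : ℕ ↦ f (33 / 2 + (n + 1 / 2))) = fun n ↦ u (n + 14) := by
    funext n
    simp only [f, u, ← Real.rpow_intCast]
    push_cast
    ring_nf
  have hu : Summable u := (summable_nat_add_iff 14).1 <|
    htail ▸ summable_of_convexOn_of_integrableOn_Ioi hconv hint hnonneg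
  have hle := tsum_le_integral_Ioi_of_convexOn hconv hint hnonneg
  rw [htail] at hle
  refine ⟨hu, ?_⟩
  rw [← hu.sum_add_tsum_nat_add 14]
  linarith [sum_range_log_mul_zpow_neg_four_le, integral_Ioi_log_mul_rpow_neg_four_le]
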